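/- arXiv:2310.11554 — 12 statements merged into one kernel-verified Lean document; each statement's English description precedes it below -/
import Mathlib

section
/- For any M > 0, any s > 0, and any w ∈ ℝ, the uniform average of exp(s w z) over the interval [−M, M] satisfies (2M)⁻¹ ∫_{−M}^{M} exp(s w z) dz ≤ exp(s² w² (2M)² / 24) = exp(s² w² M² / 6). -/
/-!
With `a = s * w * M`, the average of `exp (s * w * z)` over `[-M, M]` is `sinh a / a` for `a ≠ 0`,
and `1` for `a = 0`. The power series `sinh a / a = ∑ a ^ (2 * n) / (2 * n + 1)!` is dominated term
by term by `exp (a ^ 2 / 6) = ∑ a ^ (2 * n) / (6 ^ n * n!)`, because `6 ^ n * n! ≤ (2 * n + 1)!`.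
-/

open Nat in
lemma six_pow_mul_factorial_le (n : ℕ) : 6 ^ n * n ! ≤ (2 * n + 1)! := by
  induction n with
  | zero => simp
  | succ k ih =>
    have h : (2 * (k + 1) + 1)! = (2 * k + 3) * ((2 * k + 2) * (2 * k + 1)!) := by
      rw [show 2 * (k + 1) + 1 = (2 * k + 1) + 1 + 1 by ring, Nat.factorial_succ,
        Nat.factorial_succ]
    rw [h, Nat.factorial_succ, pow_succ]
    calc 6 ^ k * 6 * ((k + 1) * k !) = (6 * (k + 1)) * (6 ^ k * k !) := by ring
      _ ≤ ((2 * k + 3) * (2 * k + 2)) * (2 * k + 1)! := Nat.mul_le_mul (by nlinarith) ih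
      _ = _ := by ring

lemma sinh_div_self_le_exp (x : ℝ) (hx : x ≠ 0) : Real.sinh x / x ≤ Real.exp (x ^ 2 / 6) := by
  have h1 := (Real.hasSum_sinh x).div_const x
  have h2 : HasSum (fun n : ℕ => (x ^ 2 / 6) ^ n / (n.factorial : ℝ)) (Real.exp (x ^ 2 / 6)) := by
    rw [Real.exp_eq_exp_ℝ]
    exact NormedSpace.expSeries_div_hasSum_exp (x ^ 2 / 6)
  refine hasSum_le (fun n => ?_) h1 h2
  have h3 : x ^ (2 * n + 1) / ((2 * n + 1).factorial : ℝ) / x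
      = (x ^ 2) ^ n / ((2 * n + 1).factorial : ℝ) := by
    rw [pow_succ, pow_mul]
    field_simp
  rw [h3, div_pow, div_div]
  gcongr
  exact_mod_cast six_pow_mul_factorial_le n

/-- The uniform average of `exp(swz)` over `[−M, M]` is at most
`exp(s²w²(2M)²/24) = exp(s²w²M²/6)`. -/
theorem statement_7 (M s w : ℝ) (hM : 0 < M) (hs : 0 < s) :
    (2 * M)⁻¹ * ∫ z in (-M)..M, Real.exp (s * w * z) ≤
      Real.exp (s ^ 2 * w ^ 2 * (2 * M) ^ 2 / 24) ∧
    Real.exp (s ^ 2 * w ^ 2 * (2 * M) ^ 2 / 24) = Real.exp (s ^ 2 * w ^ 2 * M ^ 2 / 6) := by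
  have hE : s ^ 2 * w ^ 2 * (2 * M) ^ 2 / 24 = s ^ 2 * w ^ 2 * M ^ 2 / 6 := by ring
  refine ⟨?_, by rw [hE]⟩
  rw [hE]
  rcases eq_or_ne w 0 with rfl | hw
  · have h : (2 * M)⁻¹ * (M + M) = 1 := by
      field_simp
      ring
    simp [-mul_inv_rev, h]
  · have hc : s * w ≠ 0 := mul_ne_zero hs.ne' hw
    have hI : (2 * M)⁻¹ * ∫ z in (-M)..M, Real.exp (s * w * z)
        = Real.sinh (s * w * M) / (s * w * M) := by
      rw [intervalIntegral.integral_comp_mul_left (fun z => Real.exp z) hc, integral_exp,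
        Real.sinh_eq, smul_eq_mul, mul_neg]
      field_simp
    rw [hI, show s ^ 2 * w ^ 2 * M ^ 2 / 6 = (s * w * M) ^ 2 / 6 by ring]
    exact sinh_div_self_le_exp _ (mul_ne_zero hc hM.ne')
end

section
/- For every natural number k ≥ 0, (2k)! · (2k+1) ≥ k! · 6^k. -/
/-- For every natural number `k`, `(2k)! · (2k+1) ≥ k! · 6^k`. -/
theorem statement_8 (k : ℕ) : (2 * k).factorial * (2 * k + 1) ≥ k.factorial * 6 ^ k := by
  induction k with
  | zero => simp
  | succ k ih =>
    -- From `k` to `k + 1` the left side gains the factor `(2k+2)(2k+3)`, the right side `6(k+1)`.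
    have h : 6 * (k + 1) ≤ (2 * k + 2) * (2 * k + 3) := by nlinarith
    calc (k + 1).factorial * 6 ^ (k + 1)
        = (k.factorial * 6 ^ k) * (6 * (k + 1)) := by
          rw [Nat.factorial_succ, pow_succ]; ring
      _ ≤ ((2 * k).factorial * (2 * k + 1)) * ((2 * k + 2) * (2 * k + 3)) :=
          Nat.mul_le_mul ih h
      _ = (2 * (k + 1)).factorial * (2 * (k + 1) + 1) := by
          rw [show 2 * (k + 1) = 2 * k + 1 + 1 by ring, Nat.factorial_succ, Nat.factorial_succ]
          ring
end

section
/- Let Z be a random variable with |Z| ≤ M almost surely (M > 0) and E[Z] = 0. Suppose E[Z^k] ≤ M^k/(k+1) for every even integer k ≥ 2 and E[Z^k] ≤ 0 for every odd integer k ≥ 3. Then for every s > 0, E[exp(sZ)] ≤ (2M)⁻¹ ∫_{−M}^{M} exp(sz) dz. If moreover E[Z^k] = 0 for every odd integer k ≥ 1 (e.g., if Z has a symmetric distribution), the same bound holds for every s ∈ ℝ. -/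
open MeasureTheory

/-!
Both sides are expanded as power series in `s`. For a bounded `Z` on a finite measure space the
series `∑ sᵏ Zᵏ / k!` may be integrated term by term (it is dominated by `∑ |s|ᵏ Mᵏ / k!`), so
`∫ exp (s Z) = ∑ sᵏ / k! * ∫ Zᵏ` (`hasSum_integral_exp_mul`). Applied to Lebesgue measure on
`(-M, M]` this expands the uniform average, whose moments are `Mᵏ / (k + 1)` for even `k` and `0`
for odd `k` (`uniform_moment_even`, `uniform_moment_odd`). The hypotheses then say exactly that the
series for `Z` is dominated term by term: even terms because `sᵏ ≥ 0`, and odd terms as soon as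
`sᵏ * ∫ Zᵏ ≤ 0`, which holds for `s > 0` or when the odd moments vanish.
-/

theorem hasSum_integral_exp_mul {Ω : Type*} {mΩ : MeasurableSpace Ω} (μ : Measure Ω)
    [IsFiniteMeasure μ] (Z : Ω → ℝ) (hmeas : AEMeasurable Z μ) (M : ℝ)
    (hbdd : ∀ᵐ ω ∂μ, |Z ω| ≤ M) (s : ℝ) :
    HasSum (fun k : ℕ => s ^ k / (k.factorial : ℝ) * ∫ ω, Z ω ^ k ∂μ)
      (∫ ω, Real.exp (s * Z ω) ∂μ) := by
  have hexp : ∀ x : ℝ, HasSum (fun k : ℕ => x ^ k / (k.factorial : ℝ)) (Real.exp x) := by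
    intro x
    rw [Real.exp_eq_exp_ℝ]
    exact NormedSpace.expSeries_div_hasSum_exp x
  simp_rw [← integral_const_mul]
  refine hasSum_integral_of_dominated_convergence
    (fun k _ => (|s| * M) ^ k / (k.factorial : ℝ)) ?_ ?_ ?_ ?_ ?_
  · intro k
    exact ((hmeas.pow_const k).const_mul _).aestronglyMeasurable
  · intro k
    filter_upwards [hbdd] with ω hω
    simp only [norm_mul, norm_div, norm_pow, Real.norm_eq_abs, Nat.abs_cast]
    rw [mul_pow, div_mul_eq_mul_div]
    gcongr
  · exact Filter.Eventually.of_forall fun _ => (hexp _).summable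
  · exact integrable_const _
  · refine Filter.Eventually.of_forall fun ω => ?_
    have h := hexp (s * Z ω)
    simp_rw [mul_pow, mul_div_right_comm] at h
    exact h

theorem uniform_moment_even (M : ℝ) (hM : 0 < M) (k : ℕ) (hk : Even k) :
    (2 * M)⁻¹ * ∫ z in (-M)..M, z ^ k = M ^ k / ((k : ℝ) + 1) := by
  have hk1 : (k : ℝ) + 1 ≠ 0 := by positivity
  rw [integral_pow, hk.add_one.neg_pow]
  field_simp
  ring

theorem uniform_moment_odd (M : ℝ) (k : ℕ) (hk : Odd k) :
    (2 * M)⁻¹ * ∫ z in (-M)..M, z ^ k = 0 := by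
  rw [integral_pow, hk.add_one.neg_pow]
  simp

/-- Termwise comparison of the two power series; the sign of `s` enters only through the odd
terms `s ^ k * ∫ Z ^ k`. -/
theorem integral_exp_le_of_odd_terms_nonpos {Ω : Type*} {mΩ : MeasurableSpace Ω} (μ : Measure Ω)
    [IsProbabilityMeasure μ] (Z : Ω → ℝ) (hmeas : AEMeasurable Z μ) (M : ℝ) (hM : 0 < M)
    (hbdd : ∀ᵐ ω ∂μ, |Z ω| ≤ M)
    (heven : ∀ k : ℕ, 2 ≤ k → Even k → ∫ ω, Z ω ^ k ∂μ ≤ M ^ k / ((k : ℝ) + 1))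
    (s : ℝ) (hodd : ∀ k : ℕ, Odd k → s ^ k * ∫ ω, Z ω ^ k ∂μ ≤ 0) :
    ∫ ω, Real.exp (s * Z ω) ∂μ ≤ (2 * M)⁻¹ * ∫ z in (-M)..M, Real.exp (s * z) := by
  have hle : -M ≤ M := by linarith
  have hU : HasSum
      (fun k : ℕ => s ^ k / (k.factorial : ℝ) * ((2 * M)⁻¹ * ∫ z in (-M)..M, z ^ k))
      ((2 * M)⁻¹ * ∫ z in (-M)..M, Real.exp (s * z)) := by
    have h := (hasSum_integral_exp_mul (volume.restrict (Set.Ioc (-M) M)) (fun z : ℝ => z)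
      aemeasurable_id M ((ae_restrict_mem measurableSet_Ioc).mono
        fun z hz => abs_le.2 ⟨hz.1.le, hz.2⟩) s).mul_left (2 * M)⁻¹
    simp_rw [intervalIntegral.integral_of_le hle]
    simpa only [mul_left_comm] using h
  refine hasSum_le (fun k => ?_) (hasSum_integral_exp_mul μ Z hmeas M hbdd s) hU
  rcases Nat.even_or_odd k with hk | hk
  · rw [uniform_moment_even M hM k hk]
    have hs : 0 ≤ s ^ k := hk.pow_nonneg s
    gcongr
    rcases Nat.lt_or_ge k 2 with h2 | h2
    · obtain rfl : k = 0 := by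
        obtain ⟨m, rfl⟩ := hk
        omega
      simp
    · exact heven k h2 hk
  · rw [uniform_moment_odd M k hk, mul_zero, div_mul_eq_mul_div]
    exact div_nonpos_of_nonpos_of_nonneg (hodd k hk) (by positivity)

/-- If `|Z| ≤ M` a.s., `E Z = 0`, the even moments are dominated by the uniform moments
`M^k/(k+1)` and the odd moments are nonpositive, then the mgf of `Z` is dominated by the
uniform average of `exp(sz)` over `[−M, M]` for every `s > 0`; if moreover all odd moments
vanish, the bound holds for every real `s`. -/
theorem statement_9 {Ω : Type*} {mΩ : MeasurableSpace Ω} (μ : Measure Ω) [IsProbabilityMeasure μ]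
    (Z : Ω → ℝ) (hmeas : AEMeasurable Z μ) (M : ℝ) (hM : 0 < M)
    (hbdd : ∀ᵐ ω ∂μ, |Z ω| ≤ M)
    (hmean : ∫ ω, Z ω ∂μ = 0)
    (heven : ∀ k : ℕ, 2 ≤ k → Even k → ∫ ω, Z ω ^ k ∂μ ≤ M ^ k / ((k : ℝ) + 1))
    (hodd : ∀ k : ℕ, 3 ≤ k → Odd k → ∫ ω, Z ω ^ k ∂μ ≤ 0) :
    (∀ s : ℝ, 0 < s →
      ∫ ω, Real.exp (s * Z ω) ∂μ ≤ (2 * M)⁻¹ * ∫ z in (-M)..M, Real.exp (s * z)) ∧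
    ((∀ k : ℕ, Odd k → ∫ ω, Z ω ^ k ∂μ = 0) →
      ∀ s : ℝ,
        ∫ ω, Real.exp (s * Z ω) ∂μ ≤ (2 * M)⁻¹ * ∫ z in (-M)..M, Real.exp (s * z)) := by
  refine ⟨fun s hs => ?_, fun hzero s => ?_⟩
  · refine integral_exp_le_of_odd_terms_nonpos μ Z hmeas M hM hbdd heven s fun k hk => ?_
    refine mul_nonpos_of_nonneg_of_nonpos (by positivity) ?_
    rcases Nat.lt_or_ge k 3 with h3 | h3
    · obtain rfl : k = 1 := by
        obtain ⟨m, rfl⟩ := hk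
        omega
      simp [hmean]
    · exact hodd k h3 hk
  · refine integral_exp_le_of_odd_terms_nonpos μ Z hmeas M hM hbdd heven s fun k hk => ?_
    simp [hzero k hk]
end

section
/- Let Z be a real random variable with a Lebesgue density f that vanishes outside [−M, M] (M > 0), is symmetric (f(−z) = f(z) for all z), and is unimodal with mode 0 (f is nondecreasing on [−M, 0] and nonincreasing on [0, M]). Then for every even positive integer k, E[Z^k] ≤ M^k/(k+1). -/
/-!
Write `c = M ^ k / (k + 1)`, the `k`-th moment of the uniform law on `[-M, M]`, and choose
`a ∈ [0, M]` with `a ^ k = c`. Since `z ↦ z ^ k` increases and `f` decreases in `|z|`, the product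
`(z ^ k - c) * (f z - f a)` is nonpositive on `[-M, M]`. Integrating it over `[-M, M]`, the terms
in `f a` cancel because `∫ z ^ k = 2 * M * c`, and what remains is `E[Z ^ k] - c ≤ 0`.
Integrability of `f` comes from monotonicity on the two compact halves of its support.
-/

open MeasureTheory

/-- If `Z` has a symmetric unimodal (mode 0) Lebesgue density `f` vanishing outside `[−M, M]`,
then all even moments satisfy `E[Z^k] ≤ M^k/(k+1)`, the corresponding uniform moments. -/
theorem statement_10 {Ω : Type*} {mΩ : MeasurableSpace Ω} (P : Measure Ω)
    [IsProbabilityMeasure P] (Z : Ω → ℝ) (hZ : Measurable Z)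
    (f : ℝ → ℝ) (M : ℝ) (hM : 0 < M)
    (hf0 : ∀ z, 0 ≤ f z)
    (hlaw : Measure.map Z P = volume.withDensity (fun z => ENNReal.ofReal (f z)))
    (hsupp : ∀ z, z ∉ Set.Icc (-M) M → f z = 0)
    (hsym : ∀ z, f (-z) = f z)
    (hmono : MonotoneOn f (Set.Icc (-M) 0))
    (hanti : AntitoneOn f (Set.Icc 0 M)) :
    ∀ k : ℕ, 0 < k → Even k → ∫ ω, Z ω ^ k ∂P ≤ M ^ k / ((k : ℝ) + 1) := by
  intro k hk hev
  have hfOn : IntegrableOn f (Set.Icc (-M) M) := by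
    rw [← Set.Icc_union_Icc_eq_Icc (by linarith : -M ≤ 0) hM.le]
    exact (hmono.integrableOn_isCompact isCompact_Icc).union
      (hanti.integrableOn_isCompact isCompact_Icc)
  have hsub : Function.support f ⊆ Set.Icc (-M) M := by
    intro z hz
    by_contra h
    exact hz (hsupp z h)
  have hfi : Integrable f := (integrableOn_iff_integrable_of_support_subset hsub).1 hfOn
  have hf1 : ∫ z, f z = 1 := by
    have h1 : ∫⁻ z, ENNReal.ofReal (f z) = 1 := by
      have h2 := congrArg (fun μ => μ Set.univ) hlaw
      simp only [Measure.map_apply hZ MeasurableSet.univ, withDensity_apply _ MeasurableSet.univ,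
        Set.preimage_univ, measure_univ, Measure.restrict_univ] at h2
      exact h2.symm
    rw [integral_eq_lintegral_of_nonneg_ae (Filter.Eventually.of_forall hf0) hfi.1, h1]
    simp
  have hE : ∫ ω, Z ω ^ k ∂P = ∫ z in Set.Icc (-M) M, z ^ k * f z := by
    have h1 : ∫ ω, Z ω ^ k ∂P = ∫ z, z ^ k ∂(Measure.map Z P) :=
      (integral_map (f := fun z : ℝ => z ^ k) hZ.aemeasurable
        (continuous_pow k).aestronglyMeasurable).symm
    rw [h1, hlaw, integral_withDensity_eq_integral_toReal_smul₀
      hfi.1.aemeasurable.ennreal_ofReal (Filter.Eventually.of_forall fun z => by simp),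
      setIntegral_eq_integral_of_forall_compl_eq_zero]
    · refine integral_congr_ae (Filter.Eventually.of_forall fun z => ?_)
      simp [ENNReal.toReal_ofReal (hf0 z), mul_comm]
    · intro z hz
      simp [hsupp z hz]
  have hf1' : ∫ z in Set.Icc (-M) M, f z = 1 := by
    rw [setIntegral_eq_integral_of_forall_compl_eq_zero hsupp, hf1]
  set c : ℝ := M ^ k / ((k : ℝ) + 1) with hc
  have hc0 : 0 ≤ c := by positivity
  have hcM : c ≤ M ^ k := div_le_self (by positivity) (by linarith [Nat.cast_nonneg (α := ℝ) k])
  obtain ⟨a, ⟨ha0, haM⟩, hac⟩ : ∃ a ∈ Set.Icc 0 M, a ^ k = c := by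
    have := intermediate_value_Icc hM.le (f := fun x : ℝ => x ^ k) (by fun_prop)
    exact this ⟨by simpa [hk.ne'] using hc0, hcM⟩
  have hfabs (z : ℝ) : f |z| = f z := by
    rcases abs_choice z with h | h <;> rw [h]
    exact hsym z
  have hpt : ∀ z ∈ Set.Icc (-M) M, (z ^ k - c) * (f z - f a) ≤ 0 := by
    intro z hz
    have hzM : |z| ≤ M := abs_le.2 hz
    rw [← hfabs z, ← hev.pow_abs z, ← hac]
    rcases le_total |z| a with h | h
    · exact mul_nonpos_of_nonpos_of_nonneg
        (sub_nonpos.2 (pow_le_pow_left₀ (abs_nonneg z) h k))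
        (sub_nonneg.2 (hanti ⟨abs_nonneg z, hzM⟩ ⟨ha0, haM⟩ h))
    · exact mul_nonpos_of_nonneg_of_nonpos
        (sub_nonneg.2 (pow_le_pow_left₀ ha0 h k))
        (sub_nonpos.2 (hanti ⟨ha0, haM⟩ ⟨abs_nonneg z, hzM⟩ h))
  have hint := setIntegral_nonpos (μ := volume) measurableSet_Icc hpt
  have hunif : ∫ z in Set.Icc (-M) M, (z ^ k - c) = 0 := by
    rw [integral_Icc_eq_integral_Ioc, ← intervalIntegral.integral_of_le (by linarith),
      intervalIntegral.integral_sub (by simp) (by simp), integral_pow,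
      intervalIntegral.integral_const, (hev.add_one).neg_pow, hc, smul_eq_mul]
    field_simp
    ring
  have hi1 : IntegrableOn (fun z => z ^ k * f z) (Set.Icc (-M) M) :=
    hfOn.continuousOn_mul (by fun_prop) isCompact_Icc
  have hi2 : IntegrableOn (fun z => c * f z) (Set.Icc (-M) M) := hfOn.const_mul c
  have hi3 : IntegrableOn (fun z => (z ^ k - c) * f a) (Set.Icc (-M) M) :=
    ContinuousOn.integrableOn_compact isCompact_Icc (by fun_prop)
  have hexp : ∫ z in Set.Icc (-M) M, (z ^ k - c) * (f z - f a)
      = (∫ z in Set.Icc (-M) M, z ^ k * f z) - c * (∫ z in Set.Icc (-M) M, f z)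
        - (∫ z in Set.Icc (-M) M, (z ^ k - c)) * f a := by
    have hi12 : IntegrableOn (fun z => z ^ k * f z - c * f z) (Set.Icc (-M) M) := hi1.sub hi2
    rw [← integral_const_mul, ← integral_mul_const, ← integral_sub hi1 hi2,
      ← integral_sub hi12 hi3]
    congr 1
    ext z
    ring
  rw [hexp, hunif, hf1'] at hint
  rw [hE]
  linarith
end

section
/- Let Z be an integer-valued random variable supported in S = {−M, −M+1, …, M−1, M} for an integer M ≥ 1, with probability mass function f satisfying f(−z) = f(z) for all z and f(z) ≤ f(z+1) for every integer z with −M ≤ z ≤ −1 (symmetric and unimodal with mode 0). Then for every even positive integer k, E[Z^k] ≤ (2M)⁻¹ Σ_{z=−M}^{M} z^k, i.e., E[Z^k] ≤ (|S|/(|S|−1)) · Av(Z^k) where Av(Z^k) = (2M+1)⁻¹ Σ_{z=−M}^{M} z^k and |S| = 2M+1. -/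
/-!
Since `k` is even, `z ^ k = |z| ^ k` increases with `|z|`, whereas symmetry and unimodality make
`f` decrease with `|z|`. The two functions therefore antivary on `{−M, …, M}`, and Chebyshev's sum
inequality gives `(2M + 1) * E[Z^k] ≤ ∑ z ^ k`. This is stronger than the claim, because
`E[Z^k] ≥ 0`.
-/

/-- A symmetric mass function with mode `0` is nonincreasing in `|z|` on `{−M, …, M}`. -/
lemma le_of_abs_le_abs_of_unimodal {M : ℤ} {f : ℤ → ℝ}
    (hsym : ∀ z, f (-z) = f z)
    (hmono : ∀ z : ℤ, -M ≤ z → z ≤ -1 → f z ≤ f (z + 1))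
    {a b : ℤ} (hab : |a| ≤ |b|) (hb : |b| ≤ M) : f b ≤ f a := by
  have hstep : ∀ n : ℕ, ∀ z : ℤ, 0 ≤ z → z + n ≤ M → f (z + n) ≤ f z := by
    intro n
    induction n with
    | zero => intro z _ _; simp
    | succ n ih =>
      intro z hz hzn
      push_cast at hzn ⊢
      have h1 := hmono (-(z + (n + 1))) (by omega) (by omega)
      rw [show -(z + ((n : ℤ) + 1)) + 1 = -(z + n) by ring, hsym, hsym] at h1
      exact h1.trans (ih z hz (by omega))
  have habs : ∀ z, f |z| = f z := by
    intro z
    rcases abs_choice z with h | h <;> rw [h]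
    exact hsym z
  obtain ⟨n, hn⟩ := Int.le.dest hab
  have h := hstep n |a| (abs_nonneg a) (by omega)
  rwa [hn, habs, habs] at h


/-- For an integer-valued random variable with symmetric unimodal (mode 0) probability mass
function `f` supported in `{−M, …, M}`, every even moment satisfies
`E[Z^k] = Σ z^k f(z) ≤ (2M)⁻¹ Σ_{z=−M}^{M} z^k`, i.e. `E[Z^k] ≤ (|S|/(|S|−1)) · Av(Z^k)`. -/
theorem statement_11 (M : ℤ) (hM : 1 ≤ M) (f : ℤ → ℝ)
    (hf0 : ∀ z, 0 ≤ f z)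
    (hsupp : ∀ z, z ∉ Finset.Icc (-M) M → f z = 0)
    (hsum : ∑ z ∈ Finset.Icc (-M) M, f z = 1)
    (hsym : ∀ z, f (-z) = f z)
    (hmono : ∀ z : ℤ, -M ≤ z → z ≤ -1 → f z ≤ f (z + 1)) :
    ∀ k : ℕ, 0 < k → Even k →
      ∑ z ∈ Finset.Icc (-M) M, (z : ℝ) ^ k * f z ≤
        (2 * (M : ℝ))⁻¹ * ∑ z ∈ Finset.Icc (-M) M, (z : ℝ) ^ k := by
  intro k _ hk
  have hanti : AntivaryOn (fun z : ℤ => (z : ℝ) ^ k) f (Finset.Icc (-M) M : Finset ℤ) := by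
    intro i hi j hj hij
    rw [Finset.mem_coe, Finset.mem_Icc] at hi
    change (j : ℝ) ^ k ≤ (i : ℝ) ^ k
    by_contra! hlt
    rw [← hk.pow_abs (i : ℝ), ← hk.pow_abs (j : ℝ)] at hlt
    have habs : |i| < |j| := by exact_mod_cast lt_of_pow_lt_pow_left₀ k (abs_nonneg _) hlt
    rw [Finset.mem_coe, Finset.mem_Icc] at hj
    exact hij.not_ge (le_of_abs_le_abs_of_unimodal hsym hmono habs.le (abs_le.2 hj))
  have hcheb := hanti.card_mul_sum_le_sum_mul_sum
  have hcard : ((Finset.Icc (-M) M).card : ℝ) = 2 * M + 1 := by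
    have h : ((Finset.Icc (-M) M).card : ℤ) = 2 * M + 1 := by
      rw [Int.card_Icc]; omega
    exact_mod_cast h
  rw [hsum, mul_one, hcard] at hcheb
  have hnonneg : 0 ≤ ∑ z ∈ Finset.Icc (-M) M, (z : ℝ) ^ k * f z :=
    Finset.sum_nonneg fun z _ => mul_nonneg (hk.pow_nonneg _) (hf0 z)
  have hMpos : (0 : ℝ) < 2 * M := by
    have : (1 : ℝ) ≤ M := by exact_mod_cast hM
    linarith
  rw [le_inv_mul_iff₀ hMpos]
  linarith
end

section
/- Let Z be a real random variable with a Lebesgue density f that vanishes outside [−M, M] (M > 0), is symmetric (f(−z) = f(z)), and is unimodal with mode 0 (f nondecreasing on [−M, 0] and nonincreasing on [0, M]). Then for every s ∈ ℝ, E[exp(sZ)] ≤ (2M)⁻¹ ∫_{−M}^{M} exp(sz) dz. -/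
open MeasureTheory

/-!
Since `f` is even, `exp (s z)` may be replaced by `cosh (s z)` on both sides, and `cosh (s z)` is
nondecreasing in `|z|` while `f z` is nonincreasing in `|z|`; the claim is then Chebyshev's
integral inequality for oppositely ordered functions. It is proved with a single integral: the
average `A` of `cosh (s z)` over `[-M, M]` is attained at some `z₀ ∈ [0, M]`, and integrating
`(f z - f z₀) * (cosh (s z) - A) ≤ 0` makes the `f z₀` term vanish and leaves
`∫ f z * cosh (s z) ≤ A * ∫ f z = A`.
-/

/-- Against an even weight, only the even part of the exponential contributes. -/
lemma integral_even_mul_exp {g : ℝ → ℝ} {M : ℝ} (hg : ∀ z, g (-z) = g z)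
    (hint : IntervalIntegrable g volume (-M) M) (s : ℝ) :
    ∫ z in (-M)..M, g z * Real.exp (s * z) = ∫ z in (-M)..M, g z * Real.cosh (s * z) := by
  have h1 : IntervalIntegrable (fun z => g z * Real.exp (s * z)) volume (-M) M :=
    hint.mul_continuousOn (by fun_prop)
  have h2 : IntervalIntegrable (fun z => g z * Real.exp (-(s * z))) volume (-M) M :=
    hint.mul_continuousOn (by fun_prop)
  have h3 : ∫ z in (-M)..M, g z * Real.exp (-(s * z)) =
      ∫ z in (-M)..M, g z * Real.exp (s * z) := by
    have := intervalIntegral.integral_comp_neg (a := -M) (b := M)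
      (fun z => g z * Real.exp (s * z))
    simpa [hg] using this
  have h4 : ∀ z, g z * Real.cosh (s * z) =
      (g z * Real.exp (s * z) + g z * Real.exp (-(s * z))) / 2 := by
    intro z; rw [Real.cosh_eq]; ring
  simp only [h4]
  rw [intervalIntegral.integral_div, intervalIntegral.integral_add h1 h2, h3]
  ring

theorem statement_12 {Ω : Type*} {mΩ : MeasurableSpace Ω} (P : Measure Ω)
    [IsProbabilityMeasure P] (Z : Ω → ℝ) (hZ : Measurable Z)
    (f : ℝ → ℝ) (M : ℝ) (hM : 0 < M)
    (hf0 : ∀ z, 0 ≤ f z)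
    (hlaw : Measure.map Z P = volume.withDensity (fun z => ENNReal.ofReal (f z)))
    (hsupp : ∀ z, z ∉ Set.Icc (-M) M → f z = 0)
    (hsym : ∀ z, f (-z) = f z)
    (hmono : MonotoneOn f (Set.Icc (-M) 0))
    (hanti : AntitoneOn f (Set.Icc 0 M)) :
    ∀ s : ℝ, ∫ ω, Real.exp (s * Z ω) ∂P ≤ (2 * M)⁻¹ * ∫ z in (-M)..M, Real.exp (s * z) := by
  intro s
  have hfI : IntegrableOn f (Set.Icc (-M) M) := by
    rw [← Set.Icc_union_Icc_eq_Icc (by linarith : -M ≤ 0) hM.le]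
    exact (hmono.integrableOn_isCompact isCompact_Icc).union
      (hanti.integrableOn_isCompact isCompact_Icc)
  have hfi : IntervalIntegrable f volume (-M) M :=
    (intervalIntegrable_iff_integrableOn_Icc_of_le (by linarith)).2 hfI
  have hfint : Integrable f :=
    hfI.integrable_of_forall_notMem_eq_zero hsupp
  have hE : ∀ t : ℝ, ∫ ω, Real.exp (t * Z ω) ∂P = ∫ z in (-M)..M, f z * Real.exp (t * z) := by
    intro t
    have h1 : ∫ ω, Real.exp (t * Z ω) ∂P = ∫ x, Real.exp (t * x) ∂(Measure.map Z P) :=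
      (integral_map hZ.aemeasurable
        (Continuous.aestronglyMeasurable (f := fun x => Real.exp (t * x)) (by fun_prop))).symm
    rw [h1, hlaw, integral_withDensity_eq_integral_toReal_smul₀
      hfint.aemeasurable.ennreal_ofReal (by simp)]
    rw [intervalIntegral.integral_of_le (by linarith), ← integral_Icc_eq_integral_Ioc,
      setIntegral_eq_integral_of_forall_compl_eq_zero (fun z hz => by simp [hsupp z hz])]
    simp [ENNReal.toReal_ofReal (hf0 _)]
  -- The case `t = 0` of `hE` gives the total mass.
  have hmass : ∫ z in (-M)..M, f z = 1 := by
    have := hE 0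
    simpa using this.symm
  have hcoshi : IntervalIntegrable (fun z => Real.cosh (s * z)) volume (-M) M :=
    Continuous.intervalIntegrable (by fun_prop) _ _
  have hexp : ∫ z in (-M)..M, Real.exp (s * z) = ∫ z in (-M)..M, Real.cosh (s * z) := by
    simpa using integral_even_mul_exp (g := fun _ => (1 : ℝ)) (M := M) (fun _ => rfl) (by simp) s
  rw [hE s, integral_even_mul_exp hsym hfi s, hexp]
  set C := ∫ z in (-M)..M, Real.cosh (s * z) with hC
  have hcosh_le : ∀ x y : ℝ, |x| ≤ |y| → Real.cosh (s * x) ≤ Real.cosh (s * y) := by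
    intro x y h
    rw [Real.cosh_le_cosh, abs_mul, abs_mul]
    gcongr
  have hlow : 2 * M ≤ C := by
    have := intervalIntegral.integral_mono_on (by linarith) (by simp) hcoshi
      (fun z _ => Real.one_le_cosh (s * z)) (μ := volume) (a := -M) (b := M)
    simp at this
    linarith
  have hup : C ≤ 2 * M * Real.cosh (s * M) := by
    have := intervalIntegral.integral_mono_on (by linarith) hcoshi
      (intervalIntegrable_const (c := Real.cosh (s * M)))
      (fun z hz => hcosh_le z M (by rw [abs_of_pos hM]; exact abs_le.2 hz))
      (μ := volume) (a := -M) (b := M)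
    simp at this
    linarith
  -- By the two bounds on `C`, the average lies between the values of `cosh (s z)` at `0` and `M`.
  obtain ⟨z₀, hz₀, hA⟩ : (2 * M)⁻¹ * C ∈ (fun z => Real.cosh (s * z)) '' Set.Icc 0 M := by
    refine intermediate_value_Icc hM.le (by fun_prop) ⟨?_, ?_⟩
    · rw [inv_mul_eq_div, le_div_iff₀ (by positivity)]
      simpa using hlow
    · rw [inv_mul_eq_div, div_le_iff₀ (by positivity)]
      linarith
  set A := (2 * M)⁻¹ * C with hAdef
  have hCA : C = 2 * M * A := by rw [hAdef]; field_simp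
  have habs : ∀ z, f |z| = f z := by
    intro z
    rcases abs_choice z with h | h <;> simp [h, hsym]
  -- A rearrangement of `(f z - f z₀) * (cosh (s z) - A) ≤ 0`.
  have hpt : ∀ z ∈ Set.Icc (-M) M, f z * Real.cosh (s * z) ≤
      A * f z + f z₀ * (Real.cosh (s * z) - A) := by
    intro z hz
    have hz' : |z| ∈ Set.Icc 0 M := ⟨abs_nonneg z, abs_le.2 hz⟩
    have hA' : Real.cosh (s * z₀) = A := hA
    rcases le_total |z| z₀ with h | h
    · have h1 := hanti hz' hz₀ h
      have h2 := hcosh_le z z₀ (by rwa [abs_of_nonneg hz₀.1])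
      rw [habs] at h1
      nlinarith
    · have h1 := hanti hz₀ hz' h
      have h2 := hcosh_le z₀ z (by rwa [abs_of_nonneg hz₀.1])
      rw [habs] at h1
      nlinarith
  have hi2 : IntervalIntegrable (fun z => f z₀ * (Real.cosh (s * z) - A)) volume (-M) M :=
    Continuous.intervalIntegrable (by fun_prop) _ _
  calc ∫ z in (-M)..M, f z * Real.cosh (s * z)
      ≤ ∫ z in (-M)..M, (A * f z + f z₀ * (Real.cosh (s * z) - A)) :=
        intervalIntegral.integral_mono_on (by linarith)
          (hfi.mul_continuousOn (by fun_prop)) ((hfi.const_mul A).add hi2) hpt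
    _ = A := by
        rw [intervalIntegral.integral_add (hfi.const_mul A) hi2,
          intervalIntegral.integral_const_mul, intervalIntegral.integral_const_mul,
          intervalIntegral.integral_sub hcoshi (by simp), hmass, ← hC, hCA]
        simp
        right; ring
end

section
/- Let Z be an integer-valued random variable supported in S = {−M, …, M} for an integer M ≥ 1, with probability mass function f satisfying f(−z) = f(z) for all z and f(z) ≤ f(z+1) for every integer z with −M ≤ z ≤ −1. Then for every s ∈ ℝ, E[exp(sZ)] ≤ (2M)⁻¹ ( Σ_{z=−M}^{M} exp(sz) − 1 ), equivalently E[exp(sZ)] ≤ ((2M+1)/(2M)) · ( Av(exp(sZ)) − (2M+1)⁻¹ ) where Av(exp(sZ)) = (2M+1)⁻¹ Σ_{z=−M}^{M} exp(sz). -/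
/-!
By symmetry `exp (s z)` may be replaced by `cosh (s z)`. On the nonzero points of the support,
`f z` decreases and `cosh (s z)` increases with `|z|`, so Chebyshev's sum inequality bounds the
sum of their products there by `A * ∑ f z`, where `A` is the average of `cosh (s z)` over the
`2M` nonzero points. The remaining term is `f 0 * 1 ≤ f 0 * A`. Since `f` has total mass `1`, the
two bounds add up to `A`, which is the right-hand side.
-/

/-- Pairing `z` with `-z` turns the exponential into a hyperbolic cosine in a sum against an even
weight. -/
lemma sum_exp_mul_even (M : ℤ) (g : ℤ → ℝ) (hg : ∀ z, g (-z) = g z) (s : ℝ) :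
    ∑ z ∈ Finset.Icc (-M) M, Real.exp (s * (z : ℝ)) * g z =
      ∑ z ∈ Finset.Icc (-M) M, Real.cosh (s * (z : ℝ)) * g z := by
  have h : ∑ z ∈ Finset.Icc (-M) M, Real.exp (s * (z : ℝ)) * g z =
      ∑ z ∈ Finset.Icc (-M) M, Real.exp (-(s * (z : ℝ))) * g z := by
    refine Finset.sum_nbij' (fun z => -z) (fun z => -z) ?_ ?_ ?_ ?_ ?_
    · intro z hz
      simp only [Finset.mem_Icc] at hz ⊢
      omega
    · intro z hz
      simp only [Finset.mem_Icc] at hz ⊢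
      omega
    · simp
    · simp
    · intro z _
      simp [hg]
  have h2 : ∑ z ∈ Finset.Icc (-M) M, Real.cosh (s * (z : ℝ)) * g z =
      (∑ z ∈ Finset.Icc (-M) M, Real.exp (s * (z : ℝ)) * g z +
        ∑ z ∈ Finset.Icc (-M) M, Real.exp (-(s * (z : ℝ))) * g z) / 2 := by
    rw [← Finset.sum_add_distrib, Finset.sum_div]
    refine Finset.sum_congr rfl fun z _ => ?_
    rw [Real.cosh_eq]
    ring
  linarith


/-- For an integer-valued random variable with symmetric unimodal (mode 0) probability mass
function `f` supported in `{−M, …, M}`, for every real `s`: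
`E[exp(sZ)] = Σ exp(sz) f(z) ≤ (2M)⁻¹ (Σ_{z=−M}^{M} exp(sz) − 1)`. -/
theorem statement_13 (M : ℤ) (hM : 1 ≤ M) (f : ℤ → ℝ)
    (hf0 : ∀ z, 0 ≤ f z)
    (hsupp : ∀ z, z ∉ Finset.Icc (-M) M → f z = 0)
    (hsum : ∑ z ∈ Finset.Icc (-M) M, f z = 1)
    (hsym : ∀ z, f (-z) = f z)
    (hmono : ∀ z : ℤ, -M ≤ z → z ≤ -1 → f z ≤ f (z + 1)) :
    ∀ s : ℝ,
      ∑ z ∈ Finset.Icc (-M) M, Real.exp (s * (z : ℝ)) * f z ≤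
        (2 * (M : ℝ))⁻¹ * ((∑ z ∈ Finset.Icc (-M) M, Real.exp (s * (z : ℝ))) - 1) := by
  intro s
  have hstep : ∀ b : ℤ, 0 ≤ b → f (b + 1) ≤ f b := by
    intro b hb
    by_cases h : b + 1 ≤ M
    · have := hmono (-(b + 1)) (by omega) (by omega)
      rwa [hsym, show -(b + 1) + 1 = -b by ring, hsym] at this
    · rw [hsupp (b + 1) (by simp only [Finset.mem_Icc]; omega)]
      exact hf0 b
  have hanti : ∀ a b : ℤ, 0 ≤ a → a ≤ b → f b ≤ f a := by
    intro a b ha hab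
    induction b, hab using Int.le_induction with
    | base => exact le_rfl
    | succ n hn ih => exact (hstep n (ha.trans hn)).trans ih
  have habs : ∀ z : ℤ, f |z| = f z := by
    intro z
    rcases abs_choice z with h | h <;> rw [h]
    exact hsym z
  set T := (Finset.Icc (-M) M).erase 0 with hT
  have h0 : (0 : ℤ) ∈ Finset.Icc (-M) M := by simp only [Finset.mem_Icc]; omega
  have hcard : (T.card : ℝ) = 2 * (M : ℝ) := by
    have h : (T.card : ℤ) = 2 * M := by
      rw [hT, Finset.card_erase_of_mem h0, Int.card_Icc]
      omega
    exact_mod_cast h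
  have hMpos : (0 : ℝ) < 2 * (M : ℝ) := by
    have : (1 : ℝ) ≤ M := by exact_mod_cast hM
    linarith
  have hvary : AntivaryOn (fun z : ℤ => Real.cosh (s * (z : ℝ))) f T := by
    refine AntivaryOn.symm ?_
    intro i _ j _ hij
    simp only [Real.cosh_lt_cosh, abs_mul] at hij
    have h : |(i : ℝ)| < |(j : ℝ)| := lt_of_mul_lt_mul_left hij (abs_nonneg s)
    have h' : |i| < |j| := by exact_mod_cast h
    rw [← habs i, ← habs j]
    exact hanti _ _ (abs_nonneg i) h'.le
  have hcheb := hvary.card_mul_sum_le_sum_mul_sum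
  have hge : (T.card : ℝ) ≤ ∑ z ∈ T, Real.cosh (s * (z : ℝ)) := by
    simpa using Finset.card_nsmul_le_sum T (fun z : ℤ => Real.cosh (s * (z : ℝ))) 1
      (fun z _ => Real.one_le_cosh _)
  have e1 := sum_exp_mul_even M f hsym s
  have e2 := sum_exp_mul_even M (fun _ => 1) (fun _ => rfl) s
  simp only [mul_one] at e2
  rw [e1, e2]
  rw [← Finset.add_sum_erase _ _ h0] at hsum
  rw [← Finset.add_sum_erase _ (fun z : ℤ => Real.cosh (s * (z : ℝ)) * f z) h0,
    ← Finset.add_sum_erase _ (fun z : ℤ => Real.cosh (s * (z : ℝ))) h0, ← hT]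
  rw [← hT] at hsum
  simp only [Int.cast_zero, mul_zero, Real.cosh_zero, one_mul, add_sub_cancel_left]
  rw [hcard] at hcheb hge
  rw [inv_mul_eq_div, le_div_iff₀ hMpos]
  have hfT : ∑ z ∈ T, f z = 1 - f 0 := by linarith
  rw [hfT] at hcheb
  nlinarith [mul_le_mul_of_nonneg_left hge (hf0 0)]
end

section
/- Let m < M be real numbers and set R = M − m. Then for every s > 0, the uniform average R⁻¹ ∫_m^M exp(sz) dz ≤ exp( s·(M+m)/2 + s²R²/8 ). If moreover (M+m)/2 ≤ 0, then R⁻¹ ∫_m^M exp(sz) dz ≤ exp(s²R²/8). -/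
/-!
Let `c = (M + m) / 2`. Reflection about `c` preserves the interval, so `exp (s z)` has the same
integral as its symmetrization `exp (s c) * cosh (s (z - c))`. Since `|z - c| ≤ R / 2` there,
`cosh x ≤ exp (x² / 2)` bounds the symmetrization pointwise by `exp (s c + s² R² / 8)`.
-/

theorem exp_add_exp_reflect_le (m M s z : ℝ) (hz : z ∈ Set.Icc m M) :
    Real.exp (s * z) + Real.exp (s * (m + M - z)) ≤
      2 * Real.exp (s * ((M + m) / 2) + s ^ 2 * (M - m) ^ 2 / 8) := by
  obtain ⟨h1, h2⟩ := hz
  have hsym : Real.exp (s * z) + Real.exp (s * (m + M - z)) =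
      2 * (Real.exp (s * ((M + m) / 2)) * Real.cosh (s * (z - (M + m) / 2))) := by
    have e1 : s * z = s * ((M + m) / 2) + s * (z - (M + m) / 2) := by ring
    have e2 : s * (m + M - z) = s * ((M + m) / 2) + -(s * (z - (M + m) / 2)) := by ring
    rw [e2, Real.exp_add, Real.cosh_eq]
    nth_rewrite 1 [e1]
    rw [Real.exp_add]
    ring
  have hsq : (s * (z - (M + m) / 2)) ^ 2 / 2 ≤ s ^ 2 * (M - m) ^ 2 / 8 := by
    have hd : 0 ≤ (z - m) * (M - z) := mul_nonneg (by linarith) (by linarith)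
    nlinarith [mul_nonneg (sq_nonneg s) hd]
  rw [hsym, Real.exp_add]
  gcongr
  exact (Real.cosh_le_exp_half_sq _).trans (Real.exp_le_exp.mpr hsq)


/-- Extension of Hoeffding's lemma to the functional-average operator: for `s > 0`,
`R⁻¹ ∫_m^M exp(sz) dz ≤ exp(s(M+m)/2 + s²R²/8)`, and if `(M+m)/2 ≤ 0` (sub-𝒰 case) then
`R⁻¹ ∫_m^M exp(sz) dz ≤ exp(s²R²/8)`. -/
theorem statement_14 (m M : ℝ) (hmM : m < M) (R : ℝ) (hR : R = M - m) :
    ∀ s : ℝ, 0 < s →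
      (R⁻¹ * ∫ z in m..M, Real.exp (s * z) ≤
        Real.exp (s * ((M + m) / 2) + s ^ 2 * R ^ 2 / 8)) ∧
      ((M + m) / 2 ≤ 0 →
        R⁻¹ * ∫ z in m..M, Real.exp (s * z) ≤ Real.exp (s ^ 2 * R ^ 2 / 8)) := by
  intro s _
  have main : R⁻¹ * ∫ z in m..M, Real.exp (s * z) ≤
      Real.exp (s * ((M + m) / 2) + s ^ 2 * R ^ 2 / 8) := by
    have hRpos : 0 < R := by linarith
    have hrefl : ∫ z in m..M, Real.exp (s * (m + M - z)) = ∫ z in m..M, Real.exp (s * z) := by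
      have h := intervalIntegral.integral_comp_sub_left (a := m) (b := M)
        (fun z => Real.exp (s * z)) (m + M)
      simpa using h
    have hi1 : IntervalIntegrable (fun z => Real.exp (s * z)) MeasureTheory.volume m M :=
      Continuous.intervalIntegrable (by fun_prop) _ _
    have hi2 : IntervalIntegrable (fun z => Real.exp (s * (m + M - z)))
        MeasureTheory.volume m M :=
      Continuous.intervalIntegrable (by fun_prop) _ _
    have hle := intervalIntegral.integral_mono_on hmM.le (hi1.add hi2)
      (intervalIntegrable_const (μ := MeasureTheory.volume))
      (fun z hz => exp_add_exp_reflect_le m M s z hz)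
    rw [intervalIntegral.integral_add hi1 hi2, hrefl, intervalIntegral.integral_const,
      smul_eq_mul, ← hR] at hle
    rw [inv_mul_le_iff₀ hRpos]
    linarith
  refine ⟨main, fun hc => main.trans (Real.exp_le_exp.mpr ?_)⟩
  nlinarith
end

section
/- Let ε_1,…,ε_n be random variables on a common probability space with E[ε_i] = 0 and m_i ≤ ε_i ≤ M_i almost surely, where m_i < M_i, R_i = M_i − m_i, and (m_i + M_i)/2 ≤ 0 for every i (each ε_i is sub-𝒰 with regular support). Let w_1,…,w_n > 0 and S_n = Σ_{i=1}^n w_i ε_i. Assume that for every s > 0, max( E[exp(s S_n)], E[exp(−s S_n)] ) ≤ Π_{i=1}^n R_i⁻¹ ∫_{m_i}^{M_i} exp(s w_i z) dz. Then for every τ > 0, P(|S_n| > τ) ≤ 2 exp( −2τ² / Σ_{i=1}^n w_i² R_i² ). -/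
/-!
The proof is Chernoff's method. Each one-dimensional uniform average has the closed form
`R⁻¹ ∫_m^M exp (a z) dz = exp (a (m + M) / 2) * sinh (a R / 2) / (a R / 2)`. For `a > 0` the first
factor is at most `1` because the midpoint is nonpositive, and `sinh x / x ≤ cosh x ≤ exp (x² / 2)`
bounds the second one by `exp (a² R² / 8)`, as in Hoeffding's lemma
(`uniform_average_exp_le`). Hence both `E exp (± s S)` are at most `exp (s² V / 8)` with
`V = ∑ w_i² R_i²`, no independence being needed, and the exponential Markov inequality with
`s = 4 τ / V` bounds each tail by `exp (-2 τ² / V)`.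
-/

open MeasureTheory

lemma sinh_le_self_mul_cosh {x : ℝ} (hx : 0 ≤ x) : Real.sinh x ≤ x * Real.cosh x := by
  have hd : ∀ y : ℝ, HasDerivAt (fun y => y * Real.cosh y - Real.sinh y) (y * Real.sinh y) y := by
    intro y
    have h := ((hasDerivAt_id y).mul (Real.hasDerivAt_cosh y)).sub (Real.hasDerivAt_sinh y)
    exact h.congr_deriv (by simp only [id]; ring)
  have hmono : MonotoneOn (fun y => y * Real.cosh y - Real.sinh y) (Set.Ici (0 : ℝ)) := by
    refine monotoneOn_of_deriv_nonneg (convex_Ici 0)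
      (fun y _ => (hd y).continuousAt.continuousWithinAt)
      (fun y _ => (hd y).differentiableAt.differentiableWithinAt) ?_
    intro y hy
    rw [interior_Ici] at hy
    rw [(hd y).deriv]
    exact mul_nonneg (le_of_lt hy) (Real.sinh_nonneg_iff.mpr (le_of_lt hy))
  have h := hmono (Set.mem_Ici.mpr le_rfl) (Set.mem_Ici.mpr hx) hx
  simp at h
  exact h

/-- Hoeffding's lemma for a uniform variable on `[m, M]` whose mean is at most `0`. -/
lemma uniform_average_exp_le {m M a : ℝ} (hmM : m < M) (hmid : (m + M) / 2 ≤ 0) (ha : 0 < a) :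
    (M - m)⁻¹ * ∫ z in m..M, Real.exp (a * z) ≤ Real.exp (a ^ 2 * (M - m) ^ 2 / 8) := by
  have hR : 0 < M - m := sub_pos.mpr hmM
  set x := a * (M - m) / 2 with hx
  have hxpos : 0 < x := by positivity
  have hI : (M - m)⁻¹ * ∫ z in m..M, Real.exp (a * z)
      = Real.exp (a * ((m + M) / 2)) * (Real.sinh x / x) := by
    rw [intervalIntegral.integral_comp_mul_left (fun z => Real.exp z) ha.ne', integral_exp,
      Real.sinh_eq, smul_eq_mul]
    have e1 : Real.exp (a * M) = Real.exp (a * ((m + M) / 2)) * Real.exp x := by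
      rw [← Real.exp_add, hx]; ring_nf
    have e2 : Real.exp (a * m) = Real.exp (a * ((m + M) / 2)) * Real.exp (-x) := by
      rw [← Real.exp_add, hx]; ring_nf
    rw [e1, e2]
    generalize Real.exp x = p
    generalize Real.exp (-x) = q
    rw [hx]
    field_simp
  have h1 : Real.exp (a * ((m + M) / 2)) ≤ 1 :=
    Real.exp_le_one_iff.mpr (mul_nonpos_of_nonneg_of_nonpos ha.le hmid)
  have h2 : Real.sinh x / x ≤ Real.cosh x := by
    rw [div_le_iff₀ hxpos, mul_comm]
    exact sinh_le_self_mul_cosh hxpos.le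
  rw [hI]
  calc Real.exp (a * ((m + M) / 2)) * (Real.sinh x / x)
      ≤ 1 * Real.cosh x :=
        mul_le_mul h1 h2 (div_nonneg (Real.sinh_nonneg_iff.mpr hxpos.le) hxpos.le) zero_le_one
    _ ≤ Real.exp (x ^ 2 / 2) := by rw [one_mul]; exact Real.cosh_le_exp_half_sq x
    _ = Real.exp (a ^ 2 * (M - m) ^ 2 / 8) := by rw [hx]; ring_nf

/-- Extension of Hoeffding's inequality to densely dependent sub-𝒰 random variables: under
condition A5 (the two-sided mgf of `S_n = Σ w_i ε_i` is dominated by the product of the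
one-dimensional uniform averages), `P(|S_n| > τ) ≤ 2 exp(−2τ²/Σ w_i² R_i²)`. -/
theorem statement_15 {Ω : Type*} {mΩ : MeasurableSpace Ω} (μ : Measure Ω)
    [IsProbabilityMeasure μ] (n : ℕ) (ε : Fin n → Ω → ℝ) (m M R w : Fin n → ℝ)
    (hmeas : ∀ i, AEMeasurable (ε i) μ)
    (hmean : ∀ i, ∫ ω, ε i ω ∂μ = 0)
    (hbdd : ∀ i, ∀ᵐ ω ∂μ, ε i ω ∈ Set.Icc (m i) (M i))
    (hmM : ∀ i, m i < M i)
    (hR : ∀ i, R i = M i - m i)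
    (hsubU : ∀ i, (m i + M i) / 2 ≤ 0)
    (hw : ∀ i, 0 < w i)
    (S : Ω → ℝ) (hS : ∀ ω, S ω = ∑ i, w i * ε i ω)
    (hA5 : ∀ s : ℝ, 0 < s →
      max (∫ ω, Real.exp (s * S ω) ∂μ) (∫ ω, Real.exp (-s * S ω) ∂μ) ≤
        ∏ i, (R i)⁻¹ * ∫ z in (m i)..(M i), Real.exp (s * w i * z)) :
    ∀ τ : ℝ, 0 < τ →
      (μ {ω | τ < |S ω|}).toReal ≤
        2 * Real.exp (-2 * τ ^ 2 / ∑ i, (w i) ^ 2 * (R i) ^ 2) := by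
  intro τ hτ
  set V := ∑ i, (w i) ^ 2 * (R i) ^ 2 with hV
  have hV0 : 0 ≤ V := Finset.sum_nonneg fun i _ => by positivity
  rcases hV0.eq_or_lt with hVz | hVpos
  · -- For `V = 0` (empty sum) the exponent is `0` by the convention on division by zero.
    have h1 : (μ {ω | τ < |S ω|}).toReal ≤ 1 := measureReal_le_one
    rw [← hVz, div_zero, Real.exp_zero]
    linarith
  have hSae : AEMeasurable S μ := by
    have h : S = fun ω => ∑ i, w i * ε i ω := funext hS
    rw [h]
    exact Finset.aemeasurable_fun_sum _ fun i _ => (hmeas i).const_mul _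
  have hSb : ∀ᵐ ω ∂μ, S ω ∈ Set.Icc (∑ i, w i * m i) (∑ i, w i * M i) := by
    filter_upwards [ae_all_iff.mpr hbdd] with ω hω
    rw [hS]
    exact ⟨Finset.sum_le_sum fun i _ => mul_le_mul_of_nonneg_left (hω i).1 (hw i).le,
      Finset.sum_le_sum fun i _ => mul_le_mul_of_nonneg_left (hω i).2 (hw i).le⟩
  have hexp : ∀ t : ℝ, Integrable (fun ω => Real.exp (t * S ω)) μ := fun t =>
    ProbabilityTheory.integrable_exp_mul_of_mem_Icc hSae hSb
  have hmgf : ∀ s : ℝ, 0 < s →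
      max (∫ ω, Real.exp (s * S ω) ∂μ) (∫ ω, Real.exp (-s * S ω) ∂μ) ≤
        Real.exp (s ^ 2 * V / 8) := by
    intro s hs
    refine (hA5 s hs).trans ?_
    calc ∏ i, (R i)⁻¹ * ∫ z in (m i)..(M i), Real.exp (s * w i * z)
        ≤ ∏ i, Real.exp ((s * w i) ^ 2 * (R i) ^ 2 / 8) := by
          refine Finset.prod_le_prod (fun i _ => ?_) (fun i _ => ?_)
          · refine mul_nonneg (inv_nonneg.mpr ?_)
              (intervalIntegral.integral_nonneg (hmM i).le fun z _ => (Real.exp_pos _).le)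
            rw [hR]
            exact (sub_pos.mpr (hmM i)).le
          · rw [hR]
            exact uniform_average_exp_le (hmM i) (hsubU i) (mul_pos hs (hw i))
      _ = Real.exp (s ^ 2 * V / 8) := by
          rw [← Real.exp_sum, hV, Finset.mul_sum, Finset.sum_div]
          congr 1
          exact Finset.sum_congr rfl fun i _ => by ring
  -- `s = 4 τ / V` minimises the Chernoff exponent `-s τ + s² V / 8`.
  obtain ⟨s, hs⟩ : ∃ s, s = 4 * τ / V := ⟨_, rfl⟩
  have hspos : 0 < s := by rw [hs]; positivity
  have hopt : Real.exp (-s * τ) * Real.exp (s ^ 2 * V / 8) = Real.exp (-2 * τ ^ 2 / V) := by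
    rw [← Real.exp_add, hs]
    congr 1
    field_simp
    ring
  have hup : μ.real {ω | τ ≤ S ω} ≤ Real.exp (-2 * τ ^ 2 / V) := by
    rw [← hopt]
    exact (ProbabilityTheory.measure_ge_le_exp_mul_mgf τ hspos.le (hexp s)).trans
      (mul_le_mul_of_nonneg_left ((le_max_left _ _).trans (hmgf s hspos)) (Real.exp_pos _).le)
  have hlo : μ.real {ω | S ω ≤ -τ} ≤ Real.exp (-2 * τ ^ 2 / V) := by
    rw [← hopt]
    have h := ProbabilityTheory.measure_le_le_exp_mul_mgf (-τ) (neg_nonpos.mpr hspos.le)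
      (hexp (-s))
    rw [neg_neg, mul_neg, ← neg_mul] at h
    exact h.trans
      (mul_le_mul_of_nonneg_left ((le_max_right _ _).trans (hmgf s hspos)) (Real.exp_pos _).le)
  have hsub : {ω | τ < |S ω|} ⊆ {ω | τ ≤ S ω} ∪ {ω | S ω ≤ -τ} := by
    intro ω hω
    have hω' : τ < |S ω| := hω
    rcases lt_abs.mp hω' with h | h
    · exact Or.inl h.le
    · exact Or.inr (le_neg_of_le_neg h.le)
  calc (μ {ω | τ < |S ω|}).toReal = μ.real {ω | τ < |S ω|} := rfl
    _ ≤ μ.real ({ω | τ ≤ S ω} ∪ {ω | S ω ≤ -τ}) := measureReal_mono hsub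
    _ ≤ μ.real {ω | τ ≤ S ω} + μ.real {ω | S ω ≤ -τ} := measureReal_union_le _ _
    _ ≤ 2 * Real.exp (-2 * τ ^ 2 / V) := by linarith
end

section
/- Let a < b be real numbers with [a, b] ⊆ [−M, M] for some M > 0 and with (a+b)/2 ≤ 0. Set v = (b−a)⁻¹ ∫_a^b z² dz (= (a² + ab + b²)/3). Then for every s > 0, (b−a)⁻¹ ∫_a^b exp(sz) dz ≤ exp( M⁻² · v · ( exp(sM) − 1 − sM ) ). -/
/-!
For `|x| ≤ y`, comparing the power series of `exp` term by term gives
`y² (exp x - 1 - x) ≤ x² (exp y - 1 - y)`. With `x = s z`, `y = s M` this bounds `exp (s z)` on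
`[a, b]` by the quadratic polynomial `1 + s z + M⁻² z² (exp (s M) - 1 - s M)`. Averaging over
`[a, b]` kills the linear term in the upper bound because `Av(Z) = (a + b) / 2 ≤ 0` and `s > 0`;
then `1 + t ≤ exp t` finishes the proof.
-/

lemma hasSum_exp_sub_one_sub (x : ℝ) :
    HasSum (fun n : ℕ => x ^ (n + 2) / ((n + 2).factorial : ℝ)) (Real.exp x - 1 - x) := by
  have h : HasSum (fun n : ℕ => x ^ n / (n.factorial : ℝ)) (Real.exp x) := by
    rw [Real.exp_eq_exp_ℝ]
    exact NormedSpace.expSeries_div_hasSum_exp x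
  have h2 := (hasSum_nat_add_iff' 2).mpr h
  simpa [Finset.sum_range_succ, sub_sub] using h2

/-- A division-free form of the monotonicity of `(exp x - 1 - x) / x²`, for `|x| ≤ y`. -/
lemma sq_mul_exp_sub_le {x y : ℝ} (h : |x| ≤ y) :
    y ^ 2 * (Real.exp x - 1 - x) ≤ x ^ 2 * (Real.exp y - 1 - y) := by
  refine hasSum_le (fun n => ?_) ((hasSum_exp_sub_one_sub x).mul_left (y ^ 2))
    ((hasSum_exp_sub_one_sub y).mul_left (x ^ 2))
  have hpow : x ^ n ≤ y ^ n :=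
    (le_abs_self _).trans ((abs_pow x n).le.trans (pow_le_pow_left₀ (abs_nonneg x) h n))
  have := mul_le_mul_of_nonneg_left hpow
    (show 0 ≤ x ^ 2 * y ^ 2 / ((n + 2).factorial : ℝ) by positivity)
  calc _ = x ^ 2 * y ^ 2 / ((n + 2).factorial : ℝ) * x ^ n := by ring
    _ ≤ _ := this
    _ = _ := by ring

lemma exp_mul_le_quadratic {s z M : ℝ} (hs : 0 < s) (hM : 0 < M) (hz : z ∈ Set.Icc (-M) M) :
    Real.exp (s * z) ≤ 1 + s * z + (M ^ 2)⁻¹ * (Real.exp (s * M) - 1 - s * M) * z ^ 2 := by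
  have habs : |s * z| ≤ s * M := by
    rw [abs_mul, abs_of_pos hs]
    exact mul_le_mul_of_nonneg_left (abs_le.mpr hz) hs.le
  have h := sq_mul_exp_sub_le habs
  have h2 : Real.exp (s * z) - 1 - s * z ≤
      (s * z) ^ 2 * (Real.exp (s * M) - 1 - s * M) / (s * M) ^ 2 := by
    rw [le_div_iff₀ (by positivity)]
    linarith
  have h3 : (s * z) ^ 2 * (Real.exp (s * M) - 1 - s * M) / (s * M) ^ 2 =
      (M ^ 2)⁻¹ * (Real.exp (s * M) - 1 - s * M) * z ^ 2 := by
    field_simp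
  linarith

/-- Bernstein-type bound for the functional average: if `[a,b] ⊆ [−M,M]`, `(a+b)/2 ≤ 0`
(sub-𝒰 case), and `v = (b−a)⁻¹ ∫_a^b z² dz`, then for every `s > 0`,
`(b−a)⁻¹ ∫_a^b exp(sz) dz ≤ exp(M⁻² v (exp(sM) − 1 − sM))`. -/
theorem statement_16 (a b M : ℝ) (hab : a < b) (hM : 0 < M)
    (hIcc : Set.Icc a b ⊆ Set.Icc (-M) M)
    (hsubU : (a + b) / 2 ≤ 0)
    (v : ℝ) (hv : v = (b - a)⁻¹ * ∫ z in a..b, z ^ 2) :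
    ∀ s : ℝ, 0 < s →
      (b - a)⁻¹ * ∫ z in a..b, Real.exp (s * z) ≤
        Real.exp ((M ^ 2)⁻¹ * v * (Real.exp (s * M) - 1 - s * M)) := by
  intro s hs
  have hba : 0 < b - a := sub_pos.mpr hab
  set C := Real.exp (s * M) - 1 - s * M with hC
  have hmono : ∫ z in a..b, Real.exp (s * z) ≤
      ∫ z in a..b, (1 + s * z + (M ^ 2)⁻¹ * C * z ^ 2) :=
    intervalIntegral.integral_mono_on hab.le
      (Continuous.intervalIntegrable (by fun_prop) _ _)
      (Continuous.intervalIntegrable (by fun_prop) _ _)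
      (fun z hz => exp_mul_le_quadratic hs hM (hIcc hz))
  have hint : ∫ z in a..b, (1 + s * z + (M ^ 2)⁻¹ * C * z ^ 2) =
      (b - a) + s * ((b ^ 2 - a ^ 2) / 2) + (M ^ 2)⁻¹ * C * ∫ z in a..b, z ^ 2 := by
    rw [intervalIntegral.integral_add (Continuous.intervalIntegrable (by fun_prop) _ _)
        (Continuous.intervalIntegrable (by fun_prop) _ _),
      intervalIntegral.integral_add (Continuous.intervalIntegrable (by fun_prop) _ _)
        (Continuous.intervalIntegrable (by fun_prop) _ _),
      intervalIntegral.integral_const_mul, intervalIntegral.integral_const_mul, integral_id,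
      intervalIntegral.integral_const, smul_eq_mul, mul_one]
  calc (b - a)⁻¹ * ∫ z in a..b, Real.exp (s * z)
      ≤ (b - a)⁻¹ * ((b - a) + s * ((b ^ 2 - a ^ 2) / 2) +
          (M ^ 2)⁻¹ * C * ∫ z in a..b, z ^ 2) :=
        mul_le_mul_of_nonneg_left (hmono.trans hint.le) (inv_nonneg.mpr hba.le)
    _ = 1 + s * ((a + b) / 2) + (M ^ 2)⁻¹ * v * C := by
        rw [hv]
        generalize (∫ z in a..b, z ^ 2) = I
        field_simp
        ring
    _ ≤ (M ^ 2)⁻¹ * v * C + 1 := by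
        linarith [mul_nonpos_of_nonneg_of_nonpos hs.le hsubU]
    _ ≤ Real.exp ((M ^ 2)⁻¹ * v * C) := Real.add_one_le_exp _
end

section
/- Let ε_1,…,ε_n be random variables with E[ε_i] = 0 and a_i ≤ ε_i ≤ b_i almost surely, where a_i < b_i, [a_i, b_i] ⊆ [−M, M] for some M > 0, and (a_i + b_i)/2 ≤ 0 for every i. Let w > 0 and S_n = w · Σ_{i=1}^n ε_i. Set v_i = (b_i − a_i)⁻¹ ∫_{a_i}^{b_i} z² dz and V = Σ_{i=1}^n v_i > 0. Assume that for every s > 0, max( E[exp(s S_n)], E[exp(−s S_n)] ) ≤ Π_{i=1}^n (b_i − a_i)⁻¹ ∫_{a_i}^{b_i} exp(s w z) dz. Then for every τ > 0, P(|S_n| > τ) ≤ 2 exp( −τ² / ( 2w²V + (2/3)·w·τ·M ) ). -/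
/-!
The proof is Bernstein's: Chernoff's bound with an explicit exponent. For `|x| ≤ c < 3` one has
`exp x ≤ 1 + x + x² / (2 (1 - c/3))`, because `(k + 2)! ≥ 2 · 3 ^ k`
(`exp_le_one_add_add_sq_div`). Averaging this over `[a, b] ⊆ [-M, M]` at `x = t z`, the linear
term contributes `t (a + b) / 2 ≤ 0`, so the uniform average of `exp (t z)` is at most
`exp (t² v / (2 (1 - t M / 3)))` (`average_exp_le`). With `t = s w`, multiplying over `i` bounds
both moment generating functions of `S` in the mgf hypothesis by
`exp (s² w² V / (2 (1 - s w M / 3)))`.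

The choice `s = τ / D`, `D = w² V + w τ M / 3`, gives `1 - s w M / 3 = w² V / D`, so the Chernoff
exponent is `-s τ + s² D / 2 = -τ² / (2 D)` on each tail. Choosing `s` this way, rather than
optimally, reaches the Bernstein form without the Bennett bound.
-/

open MeasureTheory

/-- The quadratic upper bound for the exponential behind Bernstein's inequality: the Taylor
remainder is dominated by a geometric series of ratio `c / 3`. -/
lemma exp_le_one_add_add_sq_div {x c : ℝ} (hx : |x| ≤ c) (hc : c < 3) :
    Real.exp x ≤ 1 + x + x ^ 2 / (2 * (1 - c / 3)) := by
  have hc0 : 0 ≤ c := (abs_nonneg x).trans hx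
  have h1 : HasSum (fun k : ℕ => x ^ (k + 2) / (k + 2).factorial) (Real.exp x - (1 + x)) := by
    have h := NormedSpace.expSeries_div_hasSum_exp x
    rw [← Real.exp_eq_exp_ℝ, ← hasSum_nat_add_iff' 2] at h
    simpa [Finset.sum_range_succ] using h
  have h2 : HasSum (fun k : ℕ => x ^ 2 / 2 * (c / 3) ^ k) (x ^ 2 / 2 * (1 - c / 3)⁻¹) :=
    (hasSum_geometric_of_lt_one (by positivity) (by linarith)).mul_left _
  have h3 := hasSum_le (fun k => ?_) h1 h2
  · have e : x ^ 2 / 2 * (1 - c / 3)⁻¹ = x ^ 2 / (2 * (1 - c / 3)) := by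
      rw [← div_eq_mul_inv, div_div]
    linarith
  · have hfac : (2 * 3 ^ k : ℝ) ≤ ((k + 2).factorial : ℝ) := by
      have := Nat.factorial_mul_pow_le_factorial (m := 2) (n := k)
      rw [add_comm 2 k] at this
      exact_mod_cast this
    calc x ^ (k + 2) / ((k + 2).factorial : ℝ)
        ≤ (x ^ 2 * c ^ k) / ((k + 2).factorial : ℝ) := by
          gcongr
          rw [pow_add, mul_comm]
          exact mul_le_mul_of_nonneg_left
            ((le_abs_self _).trans ((abs_pow x k).le.trans
              (pow_le_pow_left₀ (abs_nonneg x) hx k))) (sq_nonneg x)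
      _ ≤ (x ^ 2 * c ^ k) / (2 * 3 ^ k) := by gcongr
      _ = x ^ 2 / 2 * (c / 3) ^ k := by rw [div_pow]; field_simp

/-- Sub-gamma bound for the uniform average of `exp (t z)` over an interval of nonpositive
midpoint. -/
lemma average_exp_le {a b M t : ℝ} (hab : a < b) (ha : -M ≤ a) (hb : b ≤ M)
    (hmid : (a + b) / 2 ≤ 0) (ht : 0 < t) (htM : t * M < 3) :
    (b - a)⁻¹ * ∫ z in a..b, Real.exp (t * z) ≤
      Real.exp (t ^ 2 / (2 * (1 - t * M / 3)) * ((b - a)⁻¹ * ∫ z in a..b, z ^ 2)) := by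
  set κ := t ^ 2 / (2 * (1 - t * M / 3)) with hκ
  have hpos : 0 < b - a := by linarith
  have h1 : ∫ z in a..b, Real.exp (t * z) ≤ ∫ z in a..b, (1 + t * z + κ * z ^ 2) := by
    refine intervalIntegral.integral_mono_on hab.le
      (Continuous.intervalIntegrable (by fun_prop) _ _)
      (Continuous.intervalIntegrable (by fun_prop) _ _) fun z hz => ?_
    have hz' : |t * z| ≤ t * M := by
      rw [abs_mul, abs_of_pos ht]
      exact mul_le_mul_of_nonneg_left
        (abs_le.2 ⟨by linarith [hz.1], by linarith [hz.2]⟩) ht.le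
    calc Real.exp (t * z) ≤ 1 + t * z + (t * z) ^ 2 / (2 * (1 - t * M / 3)) :=
          exp_le_one_add_add_sq_div hz' htM
      _ = 1 + t * z + κ * z ^ 2 := by rw [hκ]; ring
  have h2 : ∫ z in a..b, (1 + t * z + κ * z ^ 2) =
      (b - a) * (1 + t * ((a + b) / 2)) + κ * ∫ z in a..b, z ^ 2 := by
    rw [intervalIntegral.integral_add (Continuous.intervalIntegrable (by fun_prop) _ _)
        (Continuous.intervalIntegrable (by fun_prop) _ _),
      intervalIntegral.integral_add (Continuous.intervalIntegrable (by fun_prop) _ _)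
        (Continuous.intervalIntegrable (by fun_prop) _ _),
      intervalIntegral.integral_const_mul, intervalIntegral.integral_const_mul, integral_id]
    simp only [intervalIntegral.integral_const, smul_eq_mul]
    ring
  calc (b - a)⁻¹ * ∫ z in a..b, Real.exp (t * z)
      ≤ (b - a)⁻¹ * ((b - a) * (1 + t * ((a + b) / 2)) + κ * ∫ z in a..b, z ^ 2) := by
        rw [← h2]; gcongr
    _ = κ * ((b - a)⁻¹ * ∫ z in a..b, z ^ 2) + 1 + t * ((a + b) / 2) := by
        field_simp; ring
    _ ≤ κ * ((b - a)⁻¹ * ∫ z in a..b, z ^ 2) + 1 := by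
        linarith [mul_nonpos_of_nonneg_of_nonpos ht.le hmid]
    _ ≤ _ := Real.add_one_le_exp _

/-- Extension of Bernstein's inequality to densely dependent sub-𝒰 random variables: under
condition A5, with `V = Σ v_i` and `S_n = w Σ ε_i`,
`P(|S_n| > τ) ≤ 2 exp(−τ²/(2w²V + (2/3)wτM))`. -/
theorem statement_18 {Ω : Type*} {mΩ : MeasurableSpace Ω} (μ : Measure Ω)
    [IsProbabilityMeasure μ] (n : ℕ) (ε : Fin n → Ω → ℝ) (a b : Fin n → ℝ) (M w : ℝ)
    (hmeas : ∀ i, AEMeasurable (ε i) μ)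
    (hmean : ∀ i, ∫ ω, ε i ω ∂μ = 0)
    (hbdd : ∀ i, ∀ᵐ ω ∂μ, ε i ω ∈ Set.Icc (a i) (b i))
    (hab : ∀ i, a i < b i) (hM : 0 < M)
    (hIcc : ∀ i, Set.Icc (a i) (b i) ⊆ Set.Icc (-M) M)
    (hsubU : ∀ i, (a i + b i) / 2 ≤ 0)
    (hw : 0 < w)
    (S : Ω → ℝ) (hS : ∀ ω, S ω = w * ∑ i, ε i ω)
    (v : Fin n → ℝ) (hv : ∀ i, v i = (b i - a i)⁻¹ * ∫ z in (a i)..(b i), z ^ 2)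
    (V : ℝ) (hV : V = ∑ i, v i) (hVpos : 0 < V)
    (hA5 : ∀ s : ℝ, 0 < s →
      max (∫ ω, Real.exp (s * S ω) ∂μ) (∫ ω, Real.exp (-s * S ω) ∂μ) ≤
        ∏ i, (b i - a i)⁻¹ * ∫ z in (a i)..(b i), Real.exp (s * w * z)) :
    ∀ τ : ℝ, 0 < τ →
      (μ {ω | τ < |S ω|}).toReal ≤
        2 * Real.exp (-τ ^ 2 / (2 * w ^ 2 * V + (2 / 3) * w * τ * M)) := by
  intro τ hτ
  set D := w ^ 2 * V + w * τ * M / 3 with hD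
  have hwV : 0 < w ^ 2 * V := by positivity
  have hDpos : 0 < D := by positivity
  -- With this `s` the factor `1 - s w M / 3` is exactly `w² V / D`, which also keeps `s w M < 3`.
  set s := τ / D with hs
  have hspos : 0 < s := by positivity
  have hsD : s * D = τ := div_mul_cancel₀ τ hDpos.ne'
  have hgap : 1 - s * w * M / 3 = w ^ 2 * V / D := by
    rw [eq_div_iff hDpos.ne']
    linear_combination (1 : ℝ) * hD - w * M / 3 * hsD
  have hsM : s * w * M < 3 := by
    have : 0 < 1 - s * w * M / 3 := hgap ▸ div_pos hwV hDpos
    linarith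
  have hmgf : max (∫ ω, Real.exp (s * S ω) ∂μ) (∫ ω, Real.exp (-s * S ω) ∂μ) ≤
      Real.exp (s ^ 2 * D / 2) := by
    refine (hA5 s hspos).trans ?_
    calc ∏ i, (b i - a i)⁻¹ * ∫ z in (a i)..(b i), Real.exp (s * w * z)
        ≤ ∏ i, Real.exp ((s * w) ^ 2 / (2 * (1 - s * w * M / 3)) * v i) := by
          refine Finset.prod_le_prod (fun i _ => ?_) fun i _ => ?_
          · exact mul_nonneg (inv_nonneg.2 (sub_nonneg.2 (hab i).le))
              (intervalIntegral.integral_nonneg (hab i).le fun _ _ => (Real.exp_pos _).le)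
          · rw [hv i]
            exact average_exp_le (hab i) (hIcc i (Set.left_mem_Icc.2 (hab i).le)).1
              (hIcc i (Set.right_mem_Icc.2 (hab i).le)).2 (hsubU i) (mul_pos hspos hw) hsM
      _ = Real.exp (s ^ 2 * D / 2) := by
          rw [← Real.exp_sum, ← Finset.mul_sum, ← hV, hgap]
          congr 1
          field_simp
  have hSm : AEMeasurable S μ := by
    rw [funext hS]
    exact (Finset.aemeasurable_fun_sum _ fun i _ => hmeas i).const_mul w
  have hSb : ∀ᵐ ω ∂μ, S ω ∈ Set.Icc (w * ∑ i, a i) (w * ∑ i, b i) := by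
    filter_upwards [ae_all_iff.2 hbdd] with ω hω
    rw [hS ω]
    exact ⟨mul_le_mul_of_nonneg_left (Finset.sum_le_sum fun i _ => (hω i).1) hw.le,
      mul_le_mul_of_nonneg_left (Finset.sum_le_sum fun i _ => (hω i).2) hw.le⟩
  have hexp : Real.exp (-s * τ) * Real.exp (s ^ 2 * D / 2) =
      Real.exp (-τ ^ 2 / (2 * w ^ 2 * V + (2 / 3) * w * τ * M)) := by
    have h2D : 2 * w ^ 2 * V + (2 / 3) * w * τ * M = 2 * D := by rw [hD]; ring
    rw [← Real.exp_add, h2D, hs]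
    congr 1
    field_simp
    ring
  have hup : μ.real {ω | τ ≤ S ω} ≤
      Real.exp (-τ ^ 2 / (2 * w ^ 2 * V + (2 / 3) * w * τ * M)) := by
    refine (ProbabilityTheory.measure_ge_le_exp_mul_mgf τ hspos.le
      (ProbabilityTheory.integrable_exp_mul_of_mem_Icc hSm hSb)).trans ?_
    rw [← hexp]
    exact mul_le_mul_of_nonneg_left ((le_max_left _ _).trans hmgf) (Real.exp_pos _).le
  have hlow : μ.real {ω | S ω ≤ -τ} ≤
      Real.exp (-τ ^ 2 / (2 * w ^ 2 * V + (2 / 3) * w * τ * M)) := by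
    refine (ProbabilityTheory.measure_le_le_exp_mul_mgf (-τ) (neg_nonpos.2 hspos.le)
      (ProbabilityTheory.integrable_exp_mul_of_mem_Icc hSm hSb)).trans ?_
    rw [← hexp, show - -s * -τ = -s * τ by ring]
    exact mul_le_mul_of_nonneg_left ((le_max_right _ _).trans hmgf) (Real.exp_pos _).le
  calc (μ {ω | τ < |S ω|}).toReal ≤ μ.real ({ω | τ ≤ S ω} ∪ {ω | S ω ≤ -τ}) := by
        refine measureReal_mono fun ω hω => ?_
        rcases lt_abs.1 (show τ < |S ω| from hω) with h | h
        · exact Or.inl h.le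
        · exact Or.inr (show S ω ≤ -τ by linarith)
    _ ≤ μ.real {ω | τ ≤ S ω} + μ.real {ω | S ω ≤ -τ} := measureReal_union_le _ _
    _ ≤ _ := by linarith
end

section
/- Let ε_1,…,ε_n be random variables with E[ε_i] = 0 and |ε_i| ≤ M_i almost surely, where M_i > 0 and R_i = 2M_i for every i. Let w_1,…,w_n ∈ ℝ and S_n = Σ_{i=1}^n w_i ε_i. Assume that for every s > 0, max( E[exp(s S_n)], E[exp(−s S_n)] ) ≤ Π_{i=1}^n (2M_i)⁻¹ ∫_{−M_i}^{M_i} exp(s w_i z) dz. Then for every τ > 0, P(|S_n| > τ) ≤ 2 exp( −6τ² / Σ_{i=1}^n w_i² R_i² ) = 2 exp( −(3/2)·τ² / Σ_{i=1}^n w_i² M_i² ). -/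
open MeasureTheory

/-!
The proof is a Chernoff bound. The uniform average of `exp (c z)` over `[-M, M]` is
`sinh (c M) / (c M)`, and comparing power series termwise, using `6 ^ k * k! ≤ (2 k + 1)!`, gives
`sinh x / x ≤ exp (x ^ 2 / 6)`. Multiplying over `i`, both exponential moments of `S` at `s > 0` are
at most `exp (s ^ 2 V / 6)` with `V = ∑ w i ^ 2 * M i ^ 2`. Markov's inequality then bounds each tail
by `exp (-s τ + s ^ 2 V / 6)`, which is smallest at `s = 3 τ / V`, with value
`exp (-(3 / 2) τ ^ 2 / V)`; adding the two tails gives the factor `2`.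
-/

theorem six_pow_mul_factorial_le_s19 (k : ℕ) : 6 ^ k * k.factorial ≤ (2 * k + 1).factorial := by
  induction k with
  | zero => simp
  | succ k ih =>
    have h : (2 * (k + 1) + 1).factorial
        = (2 * k + 3) * ((2 * k + 2) * (2 * k + 1).factorial) := by
      rw [show 2 * (k + 1) + 1 = (2 * k + 1) + 1 + 1 by ring, Nat.factorial_succ,
        Nat.factorial_succ]
    rw [h, Nat.factorial_succ, pow_succ]
    calc 6 ^ k * 6 * ((k + 1) * k.factorial) = (6 * (k + 1)) * (6 ^ k * k.factorial) := by ring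
      _ ≤ ((2 * k + 3) * (2 * k + 2)) * (2 * k + 1).factorial :=
        Nat.mul_le_mul (by nlinarith) ih
      _ = _ := by ring

theorem sinh_le_mul_exp {x : ℝ} (hx : 0 ≤ x) : Real.sinh x ≤ x * Real.exp (x ^ 2 / 6) := by
  have h1 := Real.hasSum_sinh x
  have h2 : HasSum (fun k : ℕ => x * ((x ^ 2 / 6) ^ k / (k.factorial : ℝ)))
      (x * Real.exp (x ^ 2 / 6)) := by
    rw [Real.exp_eq_exp_ℝ]
    exact (NormedSpace.expSeries_div_hasSum_exp (x ^ 2 / 6)).mul_left x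
  refine hasSum_le (fun k => ?_) h1 h2
  have h3 : (6 : ℝ) ^ k * k.factorial ≤ (2 * k + 1).factorial := by
    exact_mod_cast six_pow_mul_factorial_le_s19 k
  have h4 : x * ((x ^ 2 / 6) ^ k / (k.factorial : ℝ))
      = x ^ (2 * k + 1) / (6 ^ k * k.factorial) := by
    rw [div_pow, ← pow_mul, pow_succ]
    field_simp
  rw [h4]
  have h5 : (0 : ℝ) < k.factorial := by exact_mod_cast k.factorial_pos
  gcongr

/-- For `x = 0` the quotient has the junk value `0`, so the bound holds there too. -/
theorem sinh_div_le_exp (x : ℝ) : Real.sinh x / x ≤ Real.exp (x ^ 2 / 6) := by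
  have key : ∀ y : ℝ, 0 ≤ y → Real.sinh y / y ≤ Real.exp (y ^ 2 / 6) := fun y hy =>
    div_le_of_le_mul₀ hy (Real.exp_pos _).le (by linarith [sinh_le_mul_exp hy])
  rcases le_total 0 x with hx | hx
  · exact key x hx
  · have h := key (-x) (by linarith)
    rwa [Real.sinh_neg, neg_div_neg_eq, neg_sq] at h

/-- The uniform law on `[-M, M]` is sub-Gaussian with variance proxy equal to its variance
`M ^ 2 / 3`. -/
theorem uniform_avg_exp_le {M : ℝ} (hM : 0 < M) (c : ℝ) :
    (2 * M)⁻¹ * ∫ z in (-M)..M, Real.exp (c * z) ≤ Real.exp (c ^ 2 * M ^ 2 / 6) := by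
  rcases eq_or_ne c 0 with rfl | hc
  · simp only [zero_mul, Real.exp_zero, intervalIntegral.integral_const, smul_eq_mul, mul_one]
    rw [show M - -M = 2 * M by ring, inv_mul_cancel₀ (by positivity)]
    simp
  · rw [intervalIntegral.integral_comp_mul_left _ hc, integral_exp]
    have h := sinh_div_le_exp (c * M)
    rw [Real.sinh_eq, mul_pow] at h
    refine le_of_eq_of_le ?_ h
    rw [smul_eq_mul, mul_neg]
    field_simp

/-- Sharpened Hoeffding inequality for sums of regular symmetric 𝒰 random variables under
dense dependence: under condition A5, with `R_i = 2M_i` and `S_n = Σ w_i ε_i`,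
`P(|S_n| > τ) ≤ 2 exp(−6τ²/Σ w_i² R_i²) = 2 exp(−(3/2)τ²/Σ w_i² M_i²)`. -/
theorem statement_19 {Ω : Type*} {mΩ : MeasurableSpace Ω} (μ : Measure Ω)
    [IsProbabilityMeasure μ] (n : ℕ) (ε : Fin n → Ω → ℝ) (M R w : Fin n → ℝ)
    (hmeas : ∀ i, AEMeasurable (ε i) μ)
    (hmean : ∀ i, ∫ ω, ε i ω ∂μ = 0)
    (hM : ∀ i, 0 < M i)
    (hR : ∀ i, R i = 2 * M i)
    (hbdd : ∀ i, ∀ᵐ ω ∂μ, |ε i ω| ≤ M i)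
    (S : Ω → ℝ) (hS : ∀ ω, S ω = ∑ i, w i * ε i ω)
    (hA5 : ∀ s : ℝ, 0 < s →
      max (∫ ω, Real.exp (s * S ω) ∂μ) (∫ ω, Real.exp (-s * S ω) ∂μ) ≤
        ∏ i, (2 * M i)⁻¹ * ∫ z in (-(M i))..(M i), Real.exp (s * w i * z)) :
    ∀ τ : ℝ, 0 < τ →
      (μ {ω | τ < |S ω|}).toReal ≤
        2 * Real.exp (-6 * τ ^ 2 / ∑ i, (w i) ^ 2 * (R i) ^ 2) ∧
      2 * Real.exp (-6 * τ ^ 2 / ∑ i, (w i) ^ 2 * (R i) ^ 2) =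
        2 * Real.exp (-(3 / 2) * τ ^ 2 / ∑ i, (w i) ^ 2 * (M i) ^ 2) := by
  have hVR : ∑ i, (w i) ^ 2 * (R i) ^ 2 = 4 * ∑ i, (w i) ^ 2 * (M i) ^ 2 := by
    rw [Finset.mul_sum]
    exact Finset.sum_congr rfl fun i _ => by rw [hR i]; ring
  intro τ hτ
  have heq : -6 * τ ^ 2 / ∑ i, (w i) ^ 2 * (R i) ^ 2
      = -(3 / 2) * τ ^ 2 / ∑ i, (w i) ^ 2 * (M i) ^ 2 := by
    rw [hVR, show -6 * τ ^ 2 = 4 * (-(3 / 2) * τ ^ 2) by ring]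
    exact mul_div_mul_left _ _ (by norm_num)
  refine ⟨?_, by rw [heq]⟩
  rw [heq]
  set V := ∑ i, (w i) ^ 2 * (M i) ^ 2 with hV
  have hV0 : 0 ≤ V := Finset.sum_nonneg fun i _ => by positivity
  change μ.real {ω | τ < |S ω|} ≤ _
  rcases hV0.eq_or_lt with h0 | hVpos
  -- When `V = 0` division by zero makes the right-hand side `2`.
  · rw [← h0, div_zero, Real.exp_zero]
    linarith [measureReal_le_one (μ := μ) (s := {ω | τ < |S ω|})]
  have hprod : ∀ s : ℝ, ∏ i, (2 * M i)⁻¹ * ∫ z in (-(M i))..(M i), Real.exp (s * w i * z)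
      ≤ Real.exp (s ^ 2 * V / 6) := by
    intro s
    have hexp : Real.exp (s ^ 2 * V / 6)
        = ∏ i, Real.exp ((s * w i) ^ 2 * (M i) ^ 2 / 6) := by
      rw [← Real.exp_sum, hV, Finset.mul_sum, Finset.sum_div]
      exact congrArg _ (Finset.sum_congr rfl fun i _ => by ring)
    rw [hexp]
    refine Finset.prod_le_prod (fun i _ => ?_) fun i _ => uniform_avg_exp_le (hM i) _
    have hi := hM i
    exact mul_nonneg (by positivity)
      (intervalIntegral.integral_nonneg (by linarith) fun z _ => (Real.exp_pos _).le)
  have hSm : AEMeasurable S μ := by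
    rw [funext hS]
    exact Finset.aemeasurable_fun_sum _ fun i _ => (hmeas i).const_mul (w i)
  have hSb : ∀ᵐ ω ∂μ, |S ω| ≤ ∑ i, |w i| * M i := by
    filter_upwards [ae_all_iff.2 hbdd] with ω hω
    rw [hS ω]
    refine (Finset.abs_sum_le_sum_abs _ _).trans (Finset.sum_le_sum fun i _ => ?_)
    rw [abs_mul]
    exact mul_le_mul_of_nonneg_left (hω i) (abs_nonneg _)
  have hint : ∀ t : ℝ, Integrable (fun ω => Real.exp (t * S ω)) μ := by
    intro t
    refine Integrable.of_bound (C := Real.exp (|t| * ∑ i, |w i| * M i))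
      (Real.measurable_exp.comp_aemeasurable (hSm.const_mul t)).aestronglyMeasurable ?_
    filter_upwards [hSb] with ω hω
    rw [Real.norm_eq_abs, Real.abs_exp]
    refine Real.exp_le_exp.2 ((le_abs_self _).trans ?_)
    rw [abs_mul]
    exact mul_le_mul_of_nonneg_left hω (abs_nonneg _)
  -- The minimiser of `-s * τ + s ^ 2 * V / 6`.
  obtain ⟨s, hs⟩ : ∃ s : ℝ, s = 3 * τ / V := ⟨_, rfl⟩
  have hspos : 0 < s := by rw [hs]; positivity
  have hmax := max_le_iff.1 ((hA5 s hspos).trans (hprod s))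
  have hval : Real.exp (-s * τ) * Real.exp (s ^ 2 * V / 6)
      = Real.exp (-(3 / 2) * τ ^ 2 / V) := by
    rw [← Real.exp_add, hs]
    congr 1
    field_simp
    ring
  have hup : μ.real {ω | τ ≤ S ω} ≤ Real.exp (-(3 / 2) * τ ^ 2 / V) := by
    refine (ProbabilityTheory.measure_ge_le_exp_mul_mgf τ hspos.le (hint s)).trans ?_
    rw [← hval]
    exact mul_le_mul_of_nonneg_left hmax.1 (Real.exp_pos _).le
  have hlow : μ.real {ω | S ω ≤ -τ} ≤ Real.exp (-(3 / 2) * τ ^ 2 / V) := by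
    refine (ProbabilityTheory.measure_le_le_exp_mul_mgf (-τ) (neg_nonpos.2 hspos.le)
      (hint (-s))).trans ?_
    rw [← hval, show -(-s) * -τ = -s * τ by ring]
    exact mul_le_mul_of_nonneg_left hmax.2 (Real.exp_pos _).le
  have hsub : {ω | τ < |S ω|} ⊆ {ω | τ ≤ S ω} ∪ {ω | S ω ≤ -τ} := by
    intro ω hω
    rcases lt_abs.1 (show τ < |S ω| from hω) with h | h
    · exact Or.inl h.le
    · exact Or.inr (show S ω ≤ -τ by linarith)
  calc μ.real {ω | τ < |S ω|} ≤ μ.real ({ω | τ ≤ S ω} ∪ {ω | S ω ≤ -τ}) := measureReal_mono hsub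
    _ ≤ μ.real {ω | τ ≤ S ω} + μ.real {ω | S ω ≤ -τ} := measureReal_union_le _ _
    _ ≤ _ := by linarith
end
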